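/- Let p = 2m be a positive even integer, H a complex Hilbert space with grading operator ε, and F bounded with F² = 1 and Fε = −εF. Let A be a ℂ-algebra, ρ : A → B(H) a homomorphism into even operators with [F,ρ(a)] = Fρ(a) − ρ(a)F p-Schatten for all a ∈ A, and let δ : A → B(H) be a linear map into even operators satisfying δ(ab) = ρ(a)δ(b) + δ(a)ρ(b) for all a, b ∈ A. Then the (p+2)-linear functional φ on A defined by φ(a₀, a₁, …, a_{p+1}) = Σ_{k=1}^{p+1} (−1)^{k−1} Trace(ε ρ(a₀)[F,ρ(a₁)]⋯[F,ρ(a_{k−1})] δ(a_k) [F,ρ(a_{k+1})]⋯[F,ρ(a_{p+1})]) is well defined (each operator inside Trace is trace class) and is a Hochschild cocycle: bφ = 0. -/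

import Mathlib

open scoped ENNReal

noncomputable section

variable {H : Type*} [NormedAddCommGroup H] [InnerProductSpace ℂ H] [CompleteSpace H]
variable {A : Type*} [NonUnitalRing A] [Module ℂ A] [SMulCommClass ℂ A A] [IsScalarTower ℂ A A]

/-- The `n`-th singular value of a (compact) operator `T` (approximation numbers). -/
def sval (T : H →L[ℂ] H) (n : ℕ) : ℝ :=
  sInf {c : ℝ | ∃ R : H →L[ℂ] H,
    Module.rank ℂ (LinearMap.range (R : H →ₗ[ℂ] H)) ≤ (n : Cardinal) ∧ c = ‖T - R‖}

/-- The `p`-Schatten norm `‖T‖_p = (Σ_n s_n(T)^p)^(1/p)`, valued in `ℝ≥0∞`. -/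
def schattenNorm (p : ℝ) (T : H →L[ℂ] H) : ℝ≥0∞ :=
  (∑' n : ℕ, ENNReal.ofReal (sval T n ^ p)) ^ (1 / p)

/-- `T` is a `p`-Schatten operator: compact with finite `p`-Schatten norm. -/
def MemSchatten (p : ℝ) (T : H →L[ℂ] H) : Prop :=
  IsCompactOperator (⇑T) ∧ schattenNorm p T < ⊤

/-- The trace of an operator, computed in a (choice of) Hilbert basis of `H`. -/
def opTrace (T : H →L[ℂ] H) : ℂ :=
  ∑' i : (exists_hilbertBasis ℂ H).choose,
    @inner ℂ H _ ((exists_hilbertBasis ℂ H).choose_spec.choose i)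
      (T ((exists_hilbertBasis ℂ H).choose_spec.choose i))

/-- The commutator `[F, T] = FT - TF`. -/
def commOp (F T : H →L[ℂ] H) : H →L[ℂ] H := F * T - T * F

/-- The ordered product `f s * f (s+1) * ⋯ * f (s+k-1)` of operators. -/
def opList (f : ℕ → H →L[ℂ] H) (s k : ℕ) : H →L[ℂ] H := ((List.range' s k).map f).prod

/-- Cyclic indexing of a tuple by natural numbers. -/
def natIdx {A : Type*} {m : ℕ} (a : Fin (m + 1) → A) (k : ℕ) : A :=
  a ⟨k % (m + 1), Nat.mod_lt _ (Nat.succ_pos m)⟩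

/-- The Hochschild coboundary `b` on `(k+1)`-linear functionals. -/
def hochB {A : Type*} [Mul A] (k : ℕ) (ψ : (Fin (k + 1) → A) → ℂ) :
    (Fin (k + 2) → A) → ℂ := fun a =>
  (∑ i : Fin (k + 1), (-1 : ℂ) ^ (i : ℕ) *
    ψ (fun j => if (j : ℕ) < (i : ℕ) then a j.castSucc
        else if (j : ℕ) = (i : ℕ) then a j.castSucc * a j.succ
        else a j.succ)) +
  (-1 : ℂ) ^ (k + 1) * ψ (fun j => if (j : ℕ) = 0 then a (Fin.last (k + 1)) * a 0
    else a j.castSucc)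

/-- The operator `ε ρ(a₀)[F,ρ(a₁)]⋯[F,ρ(a_{k-1})] δ(a_k) [F,ρ(a_{k+1})]⋯[F,ρ(a_{p+1})]`. -/
def phiDeltaOp (ρf δf : A → H →L[ℂ] H) (ε F : H →L[ℂ] H) (p : ℕ)
    (a : Fin (p + 2) → A) (k : ℕ) : H →L[ℂ] H :=
  ε * ρf (natIdx (m := p + 1) a 0) *
    opList (fun i => commOp F (ρf (natIdx (m := p + 1) a i))) 1 (k - 1) *
    δf (natIdx (m := p + 1) a k) *
    opList (fun i => commOp F (ρf (natIdx (m := p + 1) a i))) (k + 1) (p + 1 - k)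

/-- The `(p+2)`-linear functional
`φ(a₀,…,a_{p+1}) = Σ_{k=1}^{p+1} (-1)^{k-1} Trace(ε ρ(a₀)[F,ρ(a₁)]⋯δ(a_k)⋯[F,ρ(a_{p+1})])`. -/
def phiDelta (ρf δf : A → H →L[ℂ] H) (ε F : H →L[ℂ] H) (p : ℕ)
    (a : Fin (p + 2) → A) : ℂ :=
  ∑ k ∈ Finset.Icc 1 (p + 1), (-1 : ℂ) ^ (k - 1) * opTrace (phiDeltaOp ρf δf ε F p a k)

/-! ### Approximation numbers -/

lemma sval_nonneg' (T : H →L[ℂ] H) (n : ℕ) : 0 ≤ sval T n := by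
  apply Real.sInf_nonneg
  rintro c ⟨R, -, rfl⟩
  exact norm_nonneg _

lemma sval_le (T R : H →L[ℂ] H) (n : ℕ)
    (h : LinearMap.rank (R : H →ₗ[ℂ] H) ≤ (n : Cardinal)) : sval T n ≤ ‖T - R‖ := by
  refine csInf_le ⟨0, ?_⟩ ⟨R, h, rfl⟩
  rintro c ⟨R, -, rfl⟩
  exact norm_nonneg _

lemma sval_zero_le (T : H →L[ℂ] H) (n : ℕ) : sval T n ≤ ‖T‖ := by
  have := sval_le T 0 n (by simp [LinearMap.rank_zero])
  simpa using this

lemma exists_approx (T : H →L[ℂ] H) (n : ℕ) {e : ℝ} (he : 0 < e) :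
    ∃ R : H →L[ℂ] H, LinearMap.rank (R : H →ₗ[ℂ] H) ≤ (n : Cardinal) ∧
      ‖T - R‖ < sval T n + e := by
  have hne : {c : ℝ | ∃ R : H →L[ℂ] H,
    Module.rank ℂ (LinearMap.range (R : H →ₗ[ℂ] H)) ≤ (n : Cardinal) ∧ c = ‖T - R‖}.Nonempty := by
    refine ⟨‖T - 0‖, 0, ?_, rfl⟩
    have : LinearMap.rank ((0 : H →L[ℂ] H) : H →ₗ[ℂ] H) ≤ (n : Cardinal) := by
      simp [LinearMap.rank_zero]
    exact this
  obtain ⟨c, ⟨R, hR, rfl⟩, hlt⟩ := exists_lt_of_csInf_lt hne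
    (show sInf _ < sval T n + e from lt_add_of_pos_right _ he)
  exact ⟨R, hR, hlt⟩

lemma sval_antitone (T : H →L[ℂ] H) : Antitone (sval T) := by
  intro m n hmn
  refine le_of_forall_pos_le_add fun e he => ?_
  obtain ⟨R, hR, hlt⟩ := exists_approx T m he
  exact (sval_le T R n (hR.trans (by exact_mod_cast hmn))).trans hlt.le

lemma sval_mul (S T : H →L[ℂ] H) (n m : ℕ) :
    sval (S * T) (n + m) ≤ sval S n * sval T m := by
  have key : ∀ e : ℝ, 0 < e → sval (S * T) (n + m) ≤ (sval S n + e) * (sval T m + e) := by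
    intro e he
    obtain ⟨R, hR, hRl⟩ := exists_approx S n he
    obtain ⟨Q, hQ, hQl⟩ := exists_approx T m he
    have h1 : sval (S * T) (n + m) ≤ ‖S * T - (R * T + (S - R) * Q)‖ := by
      apply sval_le
      push_cast
      refine (LinearMap.rank_add_le _ _).trans (add_le_add ?_ ?_)
      · exact (LinearMap.rank_comp_le_left (T : H →ₗ[ℂ] H) (R : H →ₗ[ℂ] H)).trans hR
      · exact (LinearMap.rank_comp_le_right (Q : H →ₗ[ℂ] H)
          ((S - R : H →L[ℂ] H) : H →ₗ[ℂ] H)).trans hQ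
    have h2 : S * T - (R * T + (S - R) * Q) = (S - R) * (T - Q) := by noncomm_ring
    rw [h2] at h1
    refine h1.trans ((norm_mul_le _ _).trans ?_)
    have := sval_nonneg' S n
    exact mul_le_mul hRl.le hQl.le (norm_nonneg _) (by linarith)
  have hc : Filter.Tendsto (fun e : ℝ => (sval S n + e) * (sval T m + e)) (nhdsWithin 0 (Set.Ioi 0))
      (nhds ((sval S n + 0) * (sval T m + 0))) := by
    apply Filter.Tendsto.mono_left _ nhdsWithin_le_nhds
    exact Continuous.tendsto (by fun_prop) 0
  simp only [add_zero] at hc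
  refine ge_of_tendsto hc ?_
  filter_upwards [self_mem_nhdsWithin] with e he using key e he

lemma memSchatten_summable {p : ℕ} (hp : 0 < p) {T : H →L[ℂ] H}
    (h : MemSchatten (p : ℝ) T) : Summable (fun n => sval T n ^ p) := by
  have h2 := h.2
  unfold schattenNorm at h2
  rw [ENNReal.rpow_lt_top_iff_of_pos (by positivity)] at h2
  have := ENNReal.summable_toReal h2.ne
  refine this.congr fun n => ?_
  rw [ENNReal.toReal_ofReal (Real.rpow_nonneg (sval_nonneg' _ _) _), Real.rpow_natCast]

/-- `T` behaves like a product of `q` many `p`-Schatten operators. -/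
def Dom (p q : ℕ) (T : H →L[ℂ] H) : Prop :=
  (0 < q → IsCompactOperator (⇑T)) ∧ ∃ f : ℕ → ℝ, ∃ C : ℝ, (∀ n, 0 ≤ f n) ∧ 0 ≤ C ∧
    Summable (fun n => f n ^ p) ∧ ∀ n, sval T (q * n) ≤ C * f n ^ q

lemma Dom.bdd {p : ℕ} (hp : 0 < p) (T : H →L[ℂ] H) : Dom p 0 T := by
  refine ⟨fun h => absurd h (lt_irrefl _), fun _ => 0, ‖T‖, fun _ => le_rfl, norm_nonneg _, ?_, ?_⟩
  · simp [hp.ne', summable_zero]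
  · intro n; simpa using sval_zero_le T 0

lemma Dom.schatten {p : ℕ} (hp : 0 < p) {T : H →L[ℂ] H} (h : MemSchatten (p : ℝ) T) :
    Dom p 1 T := by
  refine ⟨fun _ => h.1, sval T, 1, sval_nonneg' T, zero_le_one, memSchatten_summable hp h, ?_⟩
  intro n; simp

lemma Dom.mul {p q r : ℕ} {S T : H →L[ℂ] H} (hS : Dom p q S) (hT : Dom p r T) :
    Dom p (q + r) (S * T) := by
  obtain ⟨hSc, f, C, hf, hC, hfs, hfb⟩ := hS
  obtain ⟨hTc, g, D, hg, hD, hgs, hgb⟩ := hT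
  refine ⟨fun h => ?_, fun n => max (f n) (g n), C * D, fun n => le_max_of_le_left (hf n),
    mul_nonneg hC hD, ?_, ?_⟩
  · rcases Nat.eq_zero_or_pos q with h0 | h0
    · exact (hTc (by omega)).clm_comp S
    · exact (hSc h0).comp_clm T
  · refine Summable.of_nonneg_of_le (fun n => pow_nonneg (le_max_of_le_left (hf n)) _)
      (fun n => ?_) (hfs.add hgs)
    show max (f n) (g n) ^ p ≤ f n ^ p + g n ^ p
    rcases max_cases (f n) (g n) with h | h <;> rw [h.1]
    · have := pow_nonneg (hg n) p; linarith
    · have := pow_nonneg (hf n) p; linarith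
  · intro n
    rw [add_mul]
    refine (sval_mul S T _ _).trans ?_
    have h1 : sval S (q * n) ≤ C * max (f n) (g n) ^ q :=
      (hfb n).trans (by gcongr; exacts [hf n, le_max_left _ _])
    have h2 : sval T (r * n) ≤ D * max (f n) (g n) ^ r :=
      (hgb n).trans (by gcongr; exacts [hg n, le_max_right _ _])
    calc _ ≤ (C * max (f n) (g n) ^ q) * (D * max (f n) (g n) ^ r) :=
          mul_le_mul h1 h2 (sval_nonneg' _ _) ((sval_nonneg' _ _).trans h1)
      _ = _ := by ring

lemma Dom.summable {p : ℕ} (hp : 0 < p) {T : H →L[ℂ] H} (h : Dom p p T) :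
    Summable (sval T) := by
  obtain ⟨-, f, C, hf, hC, hfs, hfb⟩ := h
  have : NeZero p := ⟨hp.ne'⟩
  have h1 : Summable (fun n => sval T (p * n)) :=
    Summable.of_nonneg_of_le (fun n => sval_nonneg' _ _) hfb (hfs.mul_left C)
  have h2 : Summable fun n => sval T (p * n + 0) := h1
  rw [← summable_indicator_mod_iff_summable] at h2
  exact (summable_indicator_mod_iff (sval_antitone T) _).mp h2

lemma Dom.memSchatten_one {p : ℕ} (hp : 0 < p) {T : H →L[ℂ] H} (h : Dom p p T) :
    MemSchatten 1 T := by
  refine ⟨h.1 hp, ?_⟩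
  unfold schattenNorm
  rw [ENNReal.rpow_lt_top_iff_of_pos (by norm_num)]
  simp only [Real.rpow_one]
  rw [← ENNReal.ofReal_tsum_of_nonneg (sval_nonneg' T) (h.summable hp)]
  exact ENNReal.ofReal_lt_top

/-! ### Nuclear representations and the trace -/

/-- `(u, v)` is a nuclear representation of `T`. -/
def NucRep {ι : Type} (u v : ι → H) (T : H →L[ℂ] H) : Prop :=
  Summable (fun i => ‖u i‖ * ‖v i‖) ∧ ∀ x, HasSum (fun i => (inner ℂ (u i) x : ℂ) • v i) (T x)

lemma finrank_rep (R : H →L[ℂ] H) (r : ℕ)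
    (h : LinearMap.rank (R : H →ₗ[ℂ] H) ≤ (r : Cardinal)) :
    ∃ d : ℕ, d ≤ r ∧ ∃ u v : Fin d → H, (∀ j, ‖u j‖ * ‖v j‖ ≤ ‖R‖) ∧
      ∀ x, R x = ∑ j, (inner ℂ (u j) x : ℂ) • v j := by
  have hlt : Module.rank ℂ (LinearMap.range (R : H →ₗ[ℂ] H)) < Cardinal.aleph0 :=
    lt_of_le_of_lt h (Cardinal.natCast_lt_aleph0)
  have hfd : FiniteDimensional ℂ (LinearMap.range (R : H →ₗ[ℂ] H)) :=
    Module.rank_lt_aleph0_iff.mp hlt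
  let b := stdOrthonormalBasis ℂ (LinearMap.range (R : H →ₗ[ℂ] H))
  refine ⟨_, ?_, fun j => ContinuousLinearMap.adjoint R (b j : H), fun j => (b j : H), ?_, ?_⟩
  · have : Module.rank ℂ (LinearMap.range (R : H →ₗ[ℂ] H)) ≤ (r : Cardinal) := h
    exact Module.finrank_le_of_rank_le this
  · intro j
    have hb : ‖(b j : H)‖ = 1 := b.norm_eq_one j
    rw [hb, mul_one]
    refine (ContinuousLinearMap.le_opNorm _ _).trans ?_
    rw [hb, mul_one, LinearIsometryEquiv.norm_map]
  · intro x
    have := b.sum_repr' ⟨R x, LinearMap.mem_range_self (R : H →ₗ[ℂ] H) x⟩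
    have h2 := congrArg (Subtype.val) this
    simp only [Submodule.coe_sum, Submodule.coe_smul, Submodule.coe_inner] at h2
    simp only [ContinuousLinearMap.adjoint_inner_left]
    exact h2.symm

lemma exists_nucRep (T : H →L[ℂ] H) (h : Summable (sval T)) :
    ∃ (ι : Type) (u v : ι → H), NucRep u v T := by
  let f : ℕ → ℝ := fun n => sval T (n - 1)
  have hf : Summable f := by
    rw [← summable_nat_add_iff 1]
    simpa [f] using h
  have hcond : Summable (fun k : ℕ => (2 : ℝ) ^ k * f (2 ^ k)) := by
    have h0 : ∀ n, 0 ≤ f n := fun n => sval_nonneg' T (n - 1)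
    have h1 : ∀ ⦃m n : ℕ⦄, 0 < m → m ≤ n → f n ≤ f m :=
      fun m n _ hmn => sval_antitone T (Nat.sub_le_sub_right hmn 1)
    exact (summable_condensed_iff_of_nonneg h0 h1).mpr hf
  have hex : ∀ k : ℕ, ∃ R : H →L[ℂ] H,
      LinearMap.rank (R : H →ₗ[ℂ] H) ≤ ((2 ^ k - 1 : ℕ) : Cardinal) ∧
      ‖T - R‖ < f (2 ^ k) + (1 / 4) ^ k := fun k => exists_approx T _ (by positivity)
  choose R hR hRn using hex
  have hR0 : R 0 = 0 := by
    have h0 := hR 0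
    simp only [pow_zero, Nat.sub_self, Nat.cast_zero, nonpos_iff_eq_zero] at h0
    have h1 : LinearMap.range (R 0 : H →ₗ[ℂ] H) = ⊥ := Submodule.rank_eq_zero.mp h0
    rw [LinearMap.range_eq_bot] at h1
    exact ContinuousLinearMap.coe_injective h1
  set e : ℕ → ℝ := fun k => f (2 ^ k) + (1 / 4) ^ k with he
  have hes : Summable (fun k : ℕ => (2 : ℝ) ^ k * e k) := by
    have h2 : Summable (fun k : ℕ => (1 / 2 : ℝ) ^ k) := summable_geometric_two
    refine (hcond.add h2).congr fun k => ?_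
    simp only [he, mul_add]
    rw [← mul_pow]; norm_num
  have hes0 : Summable e := by
    refine Summable.of_nonneg_of_le (fun k => (norm_nonneg _).trans (hRn k).le) (fun k => ?_) hes
    have : (1 : ℝ) ≤ 2 ^ k := one_le_pow₀ (by norm_num)
    have h0 : 0 ≤ e k := (norm_nonneg _).trans (hRn k).le
    nlinarith
  have hDr : ∀ k, LinearMap.rank ((R (k + 1) - R k : H →L[ℂ] H) : H →ₗ[ℂ] H) ≤
      ((2 ^ (k + 2) : ℕ) : Cardinal) := by
    intro k
    have h1 : ((R (k + 1) - R k : H →L[ℂ] H) : H →ₗ[ℂ] H) =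
      (R (k + 1) : H →ₗ[ℂ] H) + (((-1 : ℂ) • LinearMap.id) ∘ₗ (R k : H →ₗ[ℂ] H)) := by
      ext x; simp [sub_eq_add_neg]
    rw [h1]
    refine (LinearMap.rank_add_le _ _).trans ?_
    refine (add_le_add (hR (k + 1)) ((LinearMap.rank_comp_le_right _ _).trans (hR k))).trans ?_
    norm_cast
    rw [pow_succ, pow_succ]
    omega
  have hDn : ∀ k, ‖R (k + 1) - R k‖ ≤ e k + e (k + 1) := by
    intro k
    have : R (k + 1) - R k = (T - R k) - (T - R (k + 1)) := by abel
    rw [this]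
    exact (norm_sub_le _ _).trans (add_le_add (hRn k).le (hRn (k + 1)).le)
  choose d hd u v huv hrep using fun k => finrank_rep (R (k + 1) - R k) _ (hDr k)
  let U : (Σ k, Fin (d k)) → H := fun i => u i.1 i.2
  let V : (Σ k, Fin (d k)) → H := fun i => v i.1 i.2
  have hsum : Summable (fun i => ‖U i‖ * ‖V i‖) := by
    rw [summable_sigma_of_nonneg (fun i => by positivity)]
    refine ⟨fun k => Summable.of_finite, ?_⟩
    have hes1 : Summable (fun k : ℕ => (2 : ℝ) ^ (k + 1) * e (k + 1)) :=
      (summable_nat_add_iff 1).mpr hes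
    refine Summable.of_nonneg_of_le (fun k => tsum_nonneg fun i => by positivity) (fun k => ?_)
      ((hes.mul_left 4).add (hes1.mul_left 2))
    rw [tsum_fintype]
    have h1 : ∑ j, ‖U ⟨k, j⟩‖ * ‖V ⟨k, j⟩‖ ≤ ∑ j : Fin (d k), (e k + e (k + 1)) :=
      Finset.sum_le_sum fun j _ => (huv k j).trans (hDn k)
    refine h1.trans ?_
    rw [Finset.sum_const, Finset.card_univ, Fintype.card_fin, nsmul_eq_mul]
    have h2 : (d k : ℝ) ≤ 2 ^ (k + 2) := by exact_mod_cast hd k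
    have h0 : 0 ≤ e k + e (k + 1) := (norm_nonneg _).trans (hDn k)
    refine (mul_le_mul_of_nonneg_right h2 h0).trans (le_of_eq ?_)
    ring
  refine ⟨_, U, V, hsum, fun x => ?_⟩
  have hs : Summable (fun i => (inner ℂ (U i) x : ℂ) • V i) := by
    refine Summable.of_norm_bounded (hsum.mul_right ‖x‖) fun i => ?_
    rw [norm_smul]
    calc ‖(inner ℂ (U i) x : ℂ)‖ * ‖V i‖ ≤ (‖U i‖ * ‖x‖) * ‖V i‖ := by
          gcongr; exact norm_inner_le_norm _ _
      _ = _ := by ring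
  have hk : HasSum (fun k => (R (k + 1) - R k) x) (∑' i, (inner ℂ (U i) x : ℂ) • V i) := by
    refine hs.hasSum.sigma fun k => ?_
    rw [hrep k x]
    exact hasSum_fintype _
  have ht := hk.tendsto_sum_nat
  have hpart : ∀ n, ∑ k ∈ Finset.range n, (R (k + 1) - R k) x = R n x := by
    intro n
    have := Finset.sum_range_sub (fun k => R k x) n
    simpa [hR0] using this
  simp only [hpart] at ht
  have ht2 : Filter.Tendsto (fun n => R n x) Filter.atTop (nhds (T x)) := by
    rw [tendsto_iff_norm_sub_tendsto_zero]
    have hz : Filter.Tendsto (fun n => e n * ‖x‖) Filter.atTop (nhds 0) := by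
      simpa using hes0.tendsto_atTop_zero.mul_const ‖x‖
    refine squeeze_zero (fun n => norm_nonneg _) (fun n => ?_) hz
    rw [norm_sub_rev]
    exact ((T - R n).le_opNorm x).trans (by gcongr; exact (hRn n).le)
  rw [tendsto_nhds_unique ht2 ht]
  exact hs.hasSum

lemma sum_inner_le {κ : Type*} (b : HilbertBasis κ ℂ H) (x y : H) (s : Finset κ) :
    ∑ i ∈ s, ‖(inner ℂ x (b i) : ℂ) * inner ℂ (b i) y‖ ≤ ‖x‖ * ‖y‖ := by
  have h1 := b.orthonormal.sum_inner_products_le x (s := s)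
  have h2 := b.orthonormal.sum_inner_products_le y (s := s)
  have h3 := Finset.sum_mul_sq_le_sq_mul_sq s (fun i => ‖(inner ℂ (b i) x : ℂ)‖)
    (fun i => ‖(inner ℂ (b i) y : ℂ)‖)
  have h4 : ∑ i ∈ s, ‖(inner ℂ x (b i) : ℂ) * inner ℂ (b i) y‖ =
      ∑ i ∈ s, ‖(inner ℂ (b i) x : ℂ)‖ * ‖(inner ℂ (b i) y : ℂ)‖ := by
    refine Finset.sum_congr rfl fun i _ => ?_
    rw [norm_mul, norm_inner_symm]
  rw [h4]
  refine abs_le_of_sq_le_sq' ?_ (by positivity) |>.2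
  rw [mul_pow]
  exact h3.trans (mul_le_mul h1 h2 (Finset.sum_nonneg fun _ _ => by positivity) (by positivity))

lemma NucRep.hasSum {κ : Type*} (b : HilbertBasis κ ℂ H) {ι : Type} {u v : ι → H}
    {T : H →L[ℂ] H} (h : NucRep u v T) :
    HasSum (fun i => (inner ℂ (b i) (T (b i)) : ℂ)) (∑' n, (inner ℂ (u n) (v n) : ℂ)) := by
  let g : ι × κ → ℂ := fun z => (inner ℂ (u z.1) (b z.2) : ℂ) * inner ℂ (b z.2) (v z.1)
  have hg : Summable g := by
    apply Summable.of_norm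
    rw [summable_prod_of_nonneg (fun z => norm_nonneg _)]
    refine ⟨fun n => summable_of_sum_le (fun i => norm_nonneg _)
      (fun s => sum_inner_le b (u n) (v n) s), ?_⟩
    exact Summable.of_nonneg_of_le (fun n => tsum_nonneg fun i => norm_nonneg _)
      (fun n => Real.tsum_le_of_sum_le (fun i => norm_nonneg _)
        (fun s => sum_inner_le b (u n) (v n) s)) h.1
  have h1 : HasSum (fun n => (inner ℂ (u n) (v n) : ℂ)) (∑' z, g z) :=
    hg.hasSum.prod_fiberwise fun n => b.hasSum_inner_mul_inner (u n) (v n)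
  rw [h1.tsum_eq]
  have h2 : HasSum (fun z : κ × ι => g z.swap) (∑' z, g z) :=
    (Equiv.prodComm κ ι).hasSum_iff.mpr hg.hasSum
  refine h2.prod_fiberwise fun i => ?_
  have h3 := (h.2 (b i)).mapL (innerSL ℂ (b i))
  simpa [g, inner_smul_right] using h3

/-- The diagonal of `T` is summable in the chosen basis. -/
def DiagSummable (T : H →L[ℂ] H) : Prop :=
  Summable fun i : (exists_hilbertBasis ℂ H).choose =>
    @inner ℂ H _ ((exists_hilbertBasis ℂ H).choose_spec.choose i)
      (T ((exists_hilbertBasis ℂ H).choose_spec.choose i))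

lemma NucRep.opTrace_eq {ι : Type} {u v : ι → H} {T : H →L[ℂ] H} (h : NucRep u v T) :
    opTrace T = ∑' n, (inner ℂ (u n) (v n) : ℂ) :=
  (h.hasSum _).tsum_eq

lemma diagSummable_of_summable {T : H →L[ℂ] H} (h : Summable (sval T)) : DiagSummable T := by
  obtain ⟨ι, u, v, hn⟩ := exists_nucRep T h
  exact (hn.hasSum _).summable

lemma opTrace_mul_comm {T : H →L[ℂ] H} (h : Summable (sval T)) (B : H →L[ℂ] H) :
    opTrace (B * T) = opTrace (T * B) := by
  obtain ⟨ι, u, v, hn⟩ := exists_nucRep T h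
  have h1 : NucRep u (fun i => B (v i)) (B * T) := by
    refine ⟨?_, fun x => ?_⟩
    · refine Summable.of_nonneg_of_le (fun i => by positivity) (fun i => ?_) (hn.1.mul_left ‖B‖)
      calc ‖u i‖ * ‖B (v i)‖ ≤ ‖u i‖ * (‖B‖ * ‖v i‖) := by gcongr; exact B.le_opNorm _
        _ = _ := by ring
    · simpa using (hn.2 x).mapL B
  have h2 : NucRep (fun i => ContinuousLinearMap.adjoint B (u i)) v (T * B) := by
    refine ⟨?_, fun x => ?_⟩
    · refine Summable.of_nonneg_of_le (fun i => by positivity) (fun i => ?_) (hn.1.mul_left ‖B‖)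
      calc ‖ContinuousLinearMap.adjoint B (u i)‖ * ‖v i‖ ≤ (‖B‖ * ‖u i‖) * ‖v i‖ := by
            gcongr
            refine (ContinuousLinearMap.le_opNorm _ _).trans (le_of_eq ?_)
            rw [LinearIsometryEquiv.norm_map]
        _ = _ := by ring
    · simpa [ContinuousLinearMap.adjoint_inner_left] using hn.2 (B x)
  rw [h1.opTrace_eq, h2.opTrace_eq]
  simp [ContinuousLinearMap.adjoint_inner_left]

lemma opTrace_sum {ι : Type*} (s : Finset ι) (c : ι → ℂ) (T : ι → H →L[ℂ] H)
    (h : ∀ i ∈ s, DiagSummable (T i)) :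
    opTrace (∑ i ∈ s, c i • T i) = ∑ i ∈ s, c i * opTrace (T i) := by
  unfold opTrace
  simp only [← tsum_mul_left]
  rw [← Summable.tsum_finsetSum (fun i hi => (h i hi).mul_left (c i))]
  refine tsum_congr fun j => ?_
  simp [sum_apply, inner_sum, inner_smul_right]

/-! ### The algebra -/

/-- `ρ(a₀) X₁(a₁) ⋯ X_n(a_n)`. -/
def gprod (ρf : A → H →L[ℂ] H) (X : ℕ → A → H →L[ℂ] H) (a : ℕ → A) : ℕ → H →L[ℂ] H
  | 0 => ρf (a 0)
  | n + 1 => gprod ρf X a n * X (n + 1) (a (n + 1))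

/-- The `i`-th face of a sequence. -/
def face (i : ℕ) (a : ℕ → A) (j : ℕ) : A :=
  if j < i then a j else if j = i then a j * a (j + 1) else a (j + 1)

lemma gprod_congr (ρf : A → H →L[ℂ] H) (X : ℕ → A → H →L[ℂ] H) {a b : ℕ → A} {n : ℕ}
    (h : ∀ j ≤ n, a j = b j) : gprod ρf X a n = gprod ρf X b n := by
  induction n with
  | zero => simp [gprod, h 0 le_rfl]
  | succ n ih => simp only [gprod]; rw [ih fun j hj => h j (by omega), h (n + 1) le_rfl]

lemma gprod_telescope (ρf : A → H →L[ℂ] H) (X : ℕ → A → H →L[ℂ] H)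
    (hρ : ∀ a b, ρf (a * b) = ρf a * ρf b)
    (hX : ∀ j a b, X j (a * b) = ρf a * X j b + X j a * ρf b) (a : ℕ → A) (n : ℕ) :
    ∑ i ∈ Finset.range (n + 1), (-1 : ℂ) ^ i • gprod ρf X (face i a) n =
      (-1 : ℂ) ^ n • (gprod ρf X a n * ρf (a (n + 1))) := by
  induction n with
  | zero => simp [gprod, face, hρ]
  | succ n ih =>
    rw [Finset.sum_range_succ]
    have h1 : ∀ i ∈ Finset.range (n + 1), (-1 : ℂ) ^ i • gprod ρf X (face i a) (n + 1) =
        ((-1 : ℂ) ^ i • gprod ρf X (face i a) n) * X (n + 1) (a (n + 2)) := by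
      intro i hi
      have hi' : i < n + 1 := Finset.mem_range.mp hi
      have : face i a (n + 1) = a (n + 2) := by
        unfold face; rw [if_neg (by omega), if_neg (by omega)]
      simp only [gprod, this, smul_mul_assoc]
    rw [Finset.sum_congr rfl h1, ← Finset.sum_mul, ih]
    have h2 : gprod ρf X (face (n + 1) a) (n + 1) =
        gprod ρf X a n * X (n + 1) (a (n + 1) * a (n + 2)) := by
      simp only [gprod]
      congr 1
      · apply gprod_congr
        intro j hj
        unfold face; rw [if_pos (by omega)]
      · simp [face]
    rw [h2, hX]
    simp only [gprod, pow_succ, mul_neg, mul_one, neg_smul, smul_mul_assoc, mul_add, smul_add,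
      mul_assoc]
    abel

lemma gprod_eq_opList (ρf : A → H →L[ℂ] H) (X : ℕ → A → H →L[ℂ] H) (a : ℕ → A) (n : ℕ) :
    gprod ρf X a n = ρf (a 0) * opList (fun j => X j (a j)) 1 n := by
  induction n with
  | zero => simp [gprod, opList]
  | succ n ih =>
    simp only [gprod, ih, opList, List.range'_concat, List.map_append, List.prod_append]
    simp [mul_assoc, add_comm]

/-- The derivations in the `k`-th term: `δ` in position `k`, `[F, ρ(·)]` elsewhere. -/
def slot (ρf δf : A → H →L[ℂ] H) (F : H →L[ℂ] H) (k j : ℕ) (a : A) : H →L[ℂ] H :=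
  if j = k then δf a else commOp F (ρf a)

lemma opList_congr {f g : ℕ → H →L[ℂ] H} {s n : ℕ} (h : ∀ j, s ≤ j → j < s + n → f j = g j) :
    opList f s n = opList g s n := by
  unfold opList
  congr 1
  apply List.map_congr_left
  intro j hj
  rw [List.mem_range'_1] at hj
  exact h j hj.1 hj.2

lemma phiDeltaOp_eq (ρf δf : A → H →L[ℂ] H) (ε F : H →L[ℂ] H) (p : ℕ)
    (a : Fin (p + 2) → A) (k : ℕ) (hk : 1 ≤ k) (hk' : k ≤ p + 1) :
    phiDeltaOp ρf δf ε F p a k =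
      ε * gprod ρf (slot ρf δf F k) (natIdx (m := p + 1) a) (p + 1) := by
  rw [gprod_eq_opList]
  obtain ⟨l, rfl⟩ : ∃ l, k = l + 1 := ⟨k - 1, by omega⟩
  obtain ⟨r, rfl⟩ : ∃ r, p = l + r := ⟨p - l, by omega⟩
  have hsplit : ∀ g : ℕ → H →L[ℂ] H, opList g 1 (l + r + 1) =
      opList g 1 l * (g (l + 1) * opList g (l + 1 + 1) r) := by
    intro g
    have h1 : List.range' 1 (l + r + 1) = List.range' 1 l ++ ((l + 1) :: List.range' (l + 1 + 1) r) := by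
      rw [← List.range'_succ, show l + 1 = 1 + 1 * l by omega, List.range'_append]
      congr 1
    simp only [opList, h1, List.map_append, List.prod_append, List.map_cons, List.prod_cons]
  rw [hsplit]
  unfold phiDeltaOp
  have e1 : l + r + 1 - (l + 1) = r := by omega
  rw [e1, Nat.add_sub_cancel]
  rw [opList_congr (s := 1) (g := fun j => slot ρf δf F (l + 1) j (natIdx (m := l + r + 1) a j))
    (fun j h1 h2 => by simp only [slot]; rw [if_neg (by omega)]),
    opList_congr (s := l + 1 + 1) (g := fun j => slot ρf δf F (l + 1) j (natIdx (m := l + r + 1) a j))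
    (fun j h1 h2 => by simp only [slot]; rw [if_neg (by omega)])]
  simp [slot, mul_assoc]

lemma dom_gprod {p : ℕ} (hp : 0 < p) (ρf δf : A → H →L[ℂ] H) (F : H →L[ℂ] H)
    (hS : ∀ a : A, MemSchatten (p : ℝ) (commOp F (ρf a))) (a : ℕ → A) (k : ℕ) (hk : 1 ≤ k)
    (n : ℕ) : Dom p (if k ≤ n then n - 1 else n) (gprod ρf (slot ρf δf F k) a n) := by
  induction n with
  | zero => simpa [gprod] using Dom.bdd hp _
  | succ n ih =>
    simp only [gprod]
    by_cases h : n + 1 = k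
    · have h1 := ih.mul (Dom.bdd hp (slot ρf δf F k (n + 1) (a (n + 1))))
      rw [if_neg (by omega)] at h1
      rw [if_pos (by omega)]
      exact h1
    · have h2 : slot ρf δf F k (n + 1) (a (n + 1)) = commOp F (ρf (a (n + 1))) := by
        simp [slot, h]
      rw [h2]
      have h1 := ih.mul (Dom.schatten hp (hS (a (n + 1))))
      convert h1 using 1
      split_ifs <;> omega

lemma natIdx_of_le {m : ℕ} (a : Fin (m + 1) → A) (j : ℕ) (hj : j < m + 1) :
    natIdx a j = a ⟨j, hj⟩ := by
  unfold natIdx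
  congr 1
  ext
  exact Nat.mod_eq_of_lt hj

/-- Let `p = 2m` be a positive even integer, `(H, ε)` ℤ₂-graded, `F² = 1`, `Fε = -εF`,
`ρ : A → B(H)` a homomorphism into even operators with `[F,ρ(a)]` `p`-Schatten, and
`δ : A → B(H)` a linear map into even operators with `δ(ab) = ρ(a)δ(b) + δ(a)ρ(b)`.
Then the functional `φ` is well defined (each operator inside the trace is trace class)
and is a Hochschild cocycle: `bφ = 0`. -/
theorem phiDelta_hochschild_cocycle (m p : ℕ) (hm : 0 < m) (hp : p = 2 * m)
    (ε F : H →L[ℂ] H) (hε : IsSelfAdjoint ε) (hε2 : ε * ε = 1) (hF2 : F * F = 1)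
    (hFε : F * ε = -(ε * F))
    (ρ : A →ₙₐ[ℂ] (H →L[ℂ] H)) (heven : ∀ a : A, ε * ρ a = ρ a * ε)
    (hS : ∀ a : A, MemSchatten (p : ℝ) (commOp F (ρ a)))
    (δ : A →ₗ[ℂ] (H →L[ℂ] H)) (hδeven : ∀ a : A, ε * δ a = δ a * ε)
    (hLeib : ∀ a b : A, δ (a * b) = ρ a * δ b + δ a * ρ b) :
    (∀ a : Fin (p + 2) → A, ∀ k : ℕ, 1 ≤ k → k ≤ p + 1 →
      MemSchatten 1 (phiDeltaOp (⇑ρ) (⇑δ) ε F p a k)) ∧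
    (∀ a : Fin (p + 3) → A, hochB (p + 1) (phiDelta (⇑ρ) (⇑δ) ε F p) a = 0) := by
  have hp0 : 0 < p := by omega
  have hdom : ∀ (b : ℕ → A) (k : ℕ), 1 ≤ k → k ≤ p + 1 →
      Dom p p (ε * gprod ρ (slot ρ δ F k) b (p + 1)) := by
    intro b k hk hk'
    have h1 := (Dom.bdd hp0 ε).mul (dom_gprod hp0 (⇑ρ) (⇑δ) F hS b k hk (p + 1))
    rw [if_pos hk'] at h1
    simpa using h1
  refine ⟨fun a k hk hk' => ?_, fun a => ?_⟩
  · rw [phiDeltaOp_eq _ _ _ _ _ _ _ hk hk']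
    exact (hdom _ k hk hk').memSchatten_one hp0
  · let α : ℕ → A := natIdx (m := p + 2) a
    have hα : ∀ (j : ℕ) (hj : j < p + 3), α j = a ⟨j, hj⟩ := fun j hj => natIdx_of_le a j hj
    let ω : ℕ → A := fun j => if j = 0 then α (p + 2) * α 0 else α j
    have hface : ∀ i : Fin (p + 2), phiDelta (⇑ρ) (⇑δ) ε F p
        (fun j => if (j : ℕ) < (i : ℕ) then a j.castSucc
          else if (j : ℕ) = (i : ℕ) then a j.castSucc * a j.succ else a j.succ) =
        ∑ k ∈ Finset.Icc 1 (p + 1), (-1 : ℂ) ^ (k - 1) *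
          opTrace (ε * gprod ρ (slot ρ δ F k) (face (i : ℕ) α) (p + 1)) := by
      intro i
      unfold phiDelta
      refine Finset.sum_congr rfl fun k hk => ?_
      rw [Finset.mem_Icc] at hk
      rw [phiDeltaOp_eq _ _ _ _ _ _ _ hk.1 hk.2]
      congr 3
      apply gprod_congr
      intro j hj
      rw [natIdx_of_le _ j (by omega)]
      unfold face
      rw [hα j (by omega), hα (j + 1) (by omega)]
      rfl
    have hlast : phiDelta (⇑ρ) (⇑δ) ε F p
        (fun j => if (j : ℕ) = 0 then a (Fin.last (p + 1 + 1)) * a 0 else a j.castSucc) =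
        ∑ k ∈ Finset.Icc 1 (p + 1), (-1 : ℂ) ^ (k - 1) *
          opTrace (ε * gprod ρ (slot ρ δ F k) ω (p + 1)) := by
      unfold phiDelta
      refine Finset.sum_congr rfl fun k hk => ?_
      rw [Finset.mem_Icc] at hk
      rw [phiDeltaOp_eq _ _ _ _ _ _ _ hk.1 hk.2]
      congr 3
      apply gprod_congr
      intro j hj
      rw [natIdx_of_le _ j (by omega)]
      simp only [ω]
      rw [hα j (by omega), hα 0 (by omega), hα (p + 2) (by omega)]
      rfl
    have hterm : ∀ k ∈ Finset.Icc 1 (p + 1),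
        ∑ i ∈ Finset.range (p + 2), (-1 : ℂ) ^ i *
            opTrace (ε * gprod ρ (slot ρ δ F k) (face i α) (p + 1)) +
          (-1 : ℂ) ^ (p + 2) * opTrace (ε * gprod ρ (slot ρ δ F k) ω (p + 1)) = 0 := by
      intro k hk
      rw [Finset.mem_Icc] at hk
      rw [← opTrace_sum _ _ _ (fun i _ =>
        diagSummable_of_summable ((hdom (face i α) k hk.1 hk.2).summable hp0))]
      have h1 : ∑ i ∈ Finset.range (p + 2), (-1 : ℂ) ^ i •
            (ε * gprod ρ (slot ρ δ F k) (face i α) (p + 1)) =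
          (-1 : ℂ) ^ (p + 1) • (ε * gprod ρ (slot ρ δ F k) α (p + 1) * ρ (α (p + 2))) := by
        have ht := gprod_telescope (⇑ρ) (slot ρ δ F k) (fun a b => map_mul ρ a b) (by
          intro j a b
          unfold slot
          split_ifs
          · exact hLeib a b
          · unfold commOp
            rw [map_mul]
            noncomm_ring) α (p + 1)
        simp only [← mul_smul_comm, ← Finset.mul_sum]
        rw [ht, mul_smul_comm, mul_smul_comm, mul_assoc]
      rw [h1]
      have h2 : ε * gprod ρ (slot ρ δ F k) ω (p + 1) =
          ρ (α (p + 2)) * (ε * gprod ρ (slot ρ δ F k) α (p + 1)) := by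
        rw [gprod_eq_opList, gprod_eq_opList,
          opList_congr (f := fun j => slot ρ δ F k j (ω j)) (g := fun j => slot ρ δ F k j (α j))
          (fun j h1 _ => by simp only [ω]; rw [if_neg (by omega)])]
        have : ω 0 = α (p + 2) * α 0 := by simp [ω]
        rw [this, map_mul]
        simp only [← mul_assoc]
        rw [heven]
      rw [h2, opTrace_mul_comm ((hdom α k hk.1 hk.2).summable hp0)]
      have h3 := opTrace_sum {()} (fun _ => (-1 : ℂ) ^ (p + 1))
        (fun _ => ε * gprod ρ (slot ρ δ F k) α (p + 1) * ρ (α (p + 2))) (by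
          intro _ _
          apply diagSummable_of_summable
          have := (hdom α k hk.1 hk.2).mul (Dom.bdd hp0 (ρ (α (p + 2))))
          exact Dom.summable hp0 this)
      simp only [Finset.sum_singleton] at h3
      rw [h3]
      ring
    unfold hochB
    rw [hlast]
    simp only [hface]
    rw [Fin.sum_univ_eq_sum_range (fun i => (-1 : ℂ) ^ i * ∑ k ∈ Finset.Icc 1 (p + 1),
      (-1 : ℂ) ^ (k - 1) * opTrace (ε * gprod ρ (slot ρ δ F k) (face i α) (p + 1))) (p + 2)]
    simp only [Finset.mul_sum]
    rw [Finset.sum_comm, ← Finset.sum_add_distrib]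
    refine Finset.sum_eq_zero fun k hk => ?_
    rw [← mul_zero ((-1 : ℂ) ^ (k - 1)), ← hterm k hk, mul_add, Finset.mul_sum]
    congr 1
    · exact Finset.sum_congr rfl fun i _ => by ring
    · ring
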